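/- In a finite MDP, the almost-sure winning region for weakly synchronizing in T contains d0 if and only if there exists T' ⊆ T such that d0 is limit-sure eventually synchronizing in T' and (the uniform distribution on) T' is limit-sure eventually synchronizing in Pre(T'). -/

import Mathlib

open scoped BigOperators
open Classical Filter

/-- A finite Markov decision process with real transition probabilities. -/
structure MDP (Q A : Type) [Fintype Q] [Fintype A] where
  δ : Q → A → Q → ℝ
  δ_nonneg : ∀ q a q', 0 ≤ δ q a q'
  δ_sum : ∀ q a, ∑ q', δ q a q' = 1

namespace MDP

variable {Q A : Type} [Fintype Q] [Fintype A]

/-- `d` is a probability distribution. -/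
def IsDist (d : Q → ℝ) : Prop := (∀ q, 0 ≤ d q) ∧ ∑ q, d q = 1

/-- A (randomized, history-dependent) strategy maps a history (list of past
state-action pairs) and the current state to a distribution over actions. -/
def IsStrategy (σ : List (Q × A) → Q → A → ℝ) : Prop :=
  (∀ h q a, 0 ≤ σ h q a) ∧ ∀ h q, ∑ a, σ h q a = 1

/-- The probability of the finite path `qs` (with actions `as`) of length `i`,
under strategy `σ` from initial distribution `d0`. -/
noncomputable def pathProb (M : MDP Q A) (σ : List (Q × A) → Q → A → ℝ)
    (d0 : Q → ℝ) (i : ℕ) (qs : Fin (i + 1) → Q) (as : Fin i → A) : ℝ :=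
  d0 (qs 0) * ∏ j : Fin i,
    (σ (List.ofFn (fun k : Fin j.val =>
          (qs ⟨k.val, by have := k.isLt; have := j.isLt; omega⟩,
           as ⟨k.val, by have := k.isLt; have := j.isLt; omega⟩)))
        (qs j.castSucc) (as j))
      * M.δ (qs j.castSucc) (as j) (qs j.succ)

/-- The distribution over states after `i` steps (`M^σ_i`). -/
noncomputable def stepDist (M : MDP Q A) (σ : List (Q × A) → Q → A → ℝ)
    (d0 : Q → ℝ) (i : ℕ) (q : Q) : ℝ :=
  ∑ qs : Fin (i + 1) → Q, ∑ as : Fin i → A,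
    if qs (Fin.last i) = q then M.pathProb σ d0 i qs as else 0

/-- The probability mass that a (sub)distribution assigns to a set `T`. -/
noncomputable def mass (d : Q → ℝ) (T : Set Q) : ℝ := ∑ q, T.indicator d q

/-- The support of a (sub)distribution. -/
def supp {α : Type} (d : α → ℝ) : Set α := {q | 0 < d q}

/-- One-step sure predecessors of `Y`. -/
def Pre (M : MDP Q A) (Y : Set Q) : Set Q :=
  {q | ∃ a, ∀ q', 0 < M.δ q a q' → q' ∈ Y}

/-- Probability of reaching `T` within `i` steps. -/
noncomputable def reachProb (M : MDP Q A) (σ : List (Q × A) → Q → A → ℝ)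
    (d0 : Q → ℝ) (T : Set Q) (i : ℕ) : ℝ :=
  ∑ qs : Fin (i + 1) → Q, ∑ as : Fin i → A,
    if ∃ j, qs j ∈ T then M.pathProb σ d0 i qs as else 0

/-- `d0` is almost-sure winning for the reachability objective `◇T`:
some strategy reaches `T` with probability one. -/
def ASReach (M : MDP Q A) (d0 : Q → ℝ) (T : Set Q) : Prop :=
  ∃ σ, IsStrategy σ ∧ (⨆ i : ℕ, M.reachProb σ d0 T i) = 1

/-- `d0` is limit-sure eventually synchronizing in `T`. -/
def LimitSureEventually (M : MDP Q A) (d0 : Q → ℝ) (T : Set Q) : Prop :=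
  ∀ ε > (0 : ℝ), ∃ σ, IsStrategy σ ∧ ∃ i, 1 - ε ≤ mass (M.stepDist σ d0 i) T

/-- `d0` is almost-sure weakly synchronizing in `T`. -/
def ASWeakly (M : MDP Q A) (d0 : Q → ℝ) (T : Set Q) : Prop :=
  ∃ σ, IsStrategy σ ∧ ∀ ε > (0 : ℝ), {i : ℕ | 1 - ε ≤ mass (M.stepDist σ d0 i) T}.Infinite

/-- `d0` is almost-sure strongly synchronizing in `T`. -/
def ASStrongly (M : MDP Q A) (d0 : Q → ℝ) (T : Set Q) : Prop :=
  ∃ σ, IsStrategy σ ∧ ∀ ε > (0 : ℝ), ∃ N, ∀ i ≥ N, 1 - ε ≤ mass (M.stepDist σ d0 i) T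

/-- The uniform distribution on a set `S`. -/
noncomputable def uniformOn (S : Set Q) : Q → ℝ :=
  fun q => if q ∈ S then 1 / (S.ncard : ℝ) else 0

/-- The uniform strategy, playing all actions uniformly at random. -/
noncomputable def uniformStrategy (Q A : Type) [Fintype A] :
    List (Q × A) → Q → A → ℝ :=
  fun _ _ _ => 1 / (Fintype.card A : ℝ)

/-- Action `a` is allowed in `q` w.r.t. `S` if all its successors stay in `S`. -/
def Allowed (M : MDP Q A) (S : Set Q) (q : Q) (a : A) : Prop :=
  ∀ q', 0 < M.δ q a q' → q' ∈ S

/-- Edge relation within `S` given the allowed actions. -/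
def ECEdge (M : MDP Q A) (S : Set Q) (q q' : Q) : Prop :=
  q ∈ S ∧ q' ∈ S ∧ ∃ a, M.Allowed S q a ∧ 0 < M.δ q a q'

/-- `S` is an end-component: closed and strongly connected via allowed actions. -/
def IsEC (M : MDP Q A) (S : Set Q) : Prop :=
  (∀ q ∈ S, ∃ a, M.Allowed S q a) ∧
  ∀ q ∈ S, ∀ q' ∈ S, Relation.ReflTransGen (M.ECEdge S) q q'

/-- The union of all end-components. -/
def ECUnion (M : MDP Q A) : Set Q := ⋃₀ {S | M.IsEC S}

/-- Positive always synchronizing in `T`. -/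
def PosAlways (M : MDP Q A) (d0 : Q → ℝ) (T : Set Q) : Prop :=
  ∃ σ, IsStrategy σ ∧ ∀ i, 0 < mass (M.stepDist σ d0 i) T

/-- Positive eventually synchronizing in `T`. -/
def PosEvent (M : MDP Q A) (d0 : Q → ℝ) (T : Set Q) : Prop :=
  ∃ σ, IsStrategy σ ∧ ∃ i, 0 < mass (M.stepDist σ d0 i) T

/-- Positive weakly synchronizing in `T`. -/
def PosWeakly (M : MDP Q A) (d0 : Q → ℝ) (T : Set Q) : Prop :=
  ∃ σ, IsStrategy σ ∧ ∀ N, ∃ i ≥ N, 0 < mass (M.stepDist σ d0 i) T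

/-- Positive strongly synchronizing in `T`. -/
def PosStrongly (M : MDP Q A) (d0 : Q → ℝ) (T : Set Q) : Prop :=
  ∃ σ, IsStrategy σ ∧ ∃ N, ∀ i ≥ N, 0 < mass (M.stepDist σ d0 i) T

/-- Bounded always synchronizing in `T`. -/
def BndAlways (M : MDP Q A) (d0 : Q → ℝ) (T : Set Q) : Prop :=
  ∃ σ, IsStrategy σ ∧ ∃ ε > (0 : ℝ), ∀ i, ε < mass (M.stepDist σ d0 i) T

/-- Bounded eventually synchronizing in `T`. -/
def BndEvent (M : MDP Q A) (d0 : Q → ℝ) (T : Set Q) : Prop :=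
  ∃ σ, IsStrategy σ ∧ ∃ ε > (0 : ℝ), ∃ i, ε < mass (M.stepDist σ d0 i) T

/-- Bounded weakly synchronizing in `T`. -/
def BndWeakly (M : MDP Q A) (d0 : Q → ℝ) (T : Set Q) : Prop :=
  ∃ σ, IsStrategy σ ∧ ∃ ε > (0 : ℝ), ∀ N, ∃ i ≥ N, ε < mass (M.stepDist σ d0 i) T

/-- Bounded strongly synchronizing in `T`. -/
def BndStrongly (M : MDP Q A) (d0 : Q → ℝ) (T : Set Q) : Prop :=
  ∃ σ, IsStrategy σ ∧ ∃ ε > (0 : ℝ), ∃ N, ∀ i ≥ N, ε < mass (M.stepDist σ d0 i) T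

end MDP

/-!
Necessity: the distributions visited at the synchronizing times have a limit point `L` with
`L(T) = 1`, by compactness of the simplex, and its support is the required `T'`.

Sufficiency: let `w` be the indicator of `T'` and let `v n` be the `n`-th iterate of `w` under the
Bellman operator. The sets `{v n = 1}` are the iterates of `Pre` at `T'`, hence ultimately periodic,
say with period `r`; by monotonicity, a state whose value is close to one at some multiple of `r`
keeps a value close to one, up to a constant factor in the error, at the earlier positive multiples.
The hypothesis on `T'` allows values near one to be postponed, so they occur at large multiples.
Let `W` be the set of states with value arbitrarily close to one at multiples of `r`. An optimal
action after which `W` can be missed costs a definite amount, so replacing it by a safe action loses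
only a constant factor in the error. Thus for each `ε` there is a plan that leads from `W` back into
`W` and reaches mass `1 - ε` in `T'`; `d0` can be brought into `W`, and then such plans are
concatenated with errors tending to zero.
-/

namespace MDP

open Matrix

section Simplex

variable {ι : Type} [Fintype ι] {d w w' : ι → ℝ}

lemma dotProduct_le_dotProduct_of_supp (hd : 0 ≤ d) (h : ∀ q ∈ supp d, w q ≤ w' q) :
    d ⬝ᵥ w ≤ d ⬝ᵥ w' := by
  refine Finset.sum_le_sum fun q _ => ?_
  obtain h0 | h0 := (hd q).eq_or_lt
  · simp [← h0]
  · exact mul_le_mul_of_nonneg_left (h q h0) h0.le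

lemma dotProduct_affine (hd : d ∈ stdSimplex ℝ ι) (x y : ℝ) (w : ι → ℝ) :
    d ⬝ᵥ (fun q => x + y * w q) = x + y * (d ⬝ᵥ w) := by
  simp only [dotProduct, mul_add, Finset.sum_add_distrib, ← Finset.sum_mul, hd.2, one_mul,
    Finset.mul_sum, mul_left_comm]

lemma dotProduct_const (hd : d ∈ stdSimplex ℝ ι) (c : ℝ) : d ⬝ᵥ (fun _ => c) = c := by
  simpa using dotProduct_affine hd c 0 0

lemma le_dotProduct_of_supp {c : ℝ} (hd : d ∈ stdSimplex ℝ ι) (h : ∀ q ∈ supp d, c ≤ w q) :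
    c ≤ d ⬝ᵥ w :=
  (dotProduct_const hd c).ge.trans (dotProduct_le_dotProduct_of_supp hd.1 h)

lemma mul_one_sub_le_one_sub_dotProduct (hd : d ∈ stdSimplex ℝ ι) (hw : w ≤ 1) (q : ι) :
    d q * (1 - w q) ≤ 1 - d ⬝ᵥ w := by
  have hsum : ∑ p, d p * (1 - w p) = 1 - d ⬝ᵥ w := by
    simp only [dotProduct, mul_sub, mul_one, Finset.sum_sub_distrib, hd.2]
  rw [← hsum]
  exact Finset.single_le_sum (f := fun p => d p * (1 - w p))
    (fun p _ => mul_nonneg (hd.1 p) (sub_nonneg.2 (hw p))) (Finset.mem_univ q)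

lemma one_sub_le_of_le_dotProduct {c ε : ℝ} {q : ι} (hd : d ∈ stdSimplex ℝ ι) (hw : w ≤ 1)
    (hc : 0 < c) (hq : c ≤ d q) (h : 1 - c * ε ≤ d ⬝ᵥ w) : 1 - ε ≤ w q := by
  have hcost : c * (1 - w q) ≤ d q * (1 - w q) :=
    mul_le_mul_of_nonneg_right hq (sub_nonneg.2 (hw q))
  have hle : c * (1 - w q) ≤ c * ε := by
    linarith [mul_one_sub_le_one_sub_dotProduct hd hw q]
  linarith [le_of_mul_le_mul_left hle hc]

lemma dotProduct_le_one (hd : d ∈ stdSimplex ℝ ι) (hw : w ≤ 1) : d ⬝ᵥ w ≤ 1 :=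
  (dotProduct_le_dotProduct_of_supp hd.1 fun q _ => hw q).trans (dotProduct_const hd 1).le

lemma dotProduct_eq_one_iff (hd : d ∈ stdSimplex ℝ ι) (hw : w ≤ 1) :
    d ⬝ᵥ w = 1 ↔ ∀ q ∈ supp d, w q = 1 := by
  refine ⟨fun h q hq => le_antisymm (hw q) ?_, fun h =>
    (dotProduct_le_one hd hw).antisymm (le_dotProduct_of_supp hd fun q hq => (h q hq).ge)⟩
  have hle := mul_one_sub_le_one_sub_dotProduct hd hw q
  rw [h, sub_self] at hle
  exact sub_nonpos.1 (nonpos_of_mul_nonpos_right hle hq)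

lemma vecMul_mem_stdSimplex {P : Matrix ι ι ℝ} (hd : d ∈ stdSimplex ℝ ι)
    (hP : P ∈ rowStochastic ℝ ι) : d ᵥ* P ∈ stdSimplex ℝ ι := by
  refine ⟨nonneg_vecMul_of_mem_rowStochastic hP hd.1, ?_⟩
  rw [← dotProduct_one]
  exact vecMul_dotProduct_one_eq_one_rowStochastic hP (by rw [dotProduct_one, hd.2])

lemma supp_vecMul_subset {κ : Type} {P : Matrix ι κ ℝ} {Y : Set κ} (hd : 0 ≤ d)
    (hP : ∀ q q', 0 ≤ P q q') (h : ∀ q ∈ supp d, supp (P q) ⊆ Y) : supp (d ᵥ* P) ⊆ Y := by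
  intro q' hq'
  obtain ⟨q, -, hq⟩ := Finset.exists_ne_zero_of_sum_ne_zero
    (show 0 < ∑ q, d q * P q q' from hq').ne'
  have hdq : 0 < d q := (hd q).lt_of_ne' (left_ne_zero_of_mul hq)
  have hPq : 0 < P q q' := (hP q q').lt_of_ne' (right_ne_zero_of_mul hq)
  exact h q hdq hPq

lemma supp_nonempty_of_mem_stdSimplex (hd : d ∈ stdSimplex ℝ ι) : (supp d).Nonempty := by
  obtain ⟨q, -, hq⟩ := Finset.exists_ne_zero_of_sum_ne_zero
    (show ∑ q, d q ≠ 0 by rw [hd.2]; exact one_ne_zero)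
  exact ⟨q, (hd.1 q).lt_of_ne' hq⟩

lemma exists_pos_le_of_pos {ι : Type*} [Finite ι] (g : ι → ℝ) :
    ∃ c > 0, ∀ i, 0 < g i → c ≤ g i := by
  rcases isEmpty_or_nonempty {i // 0 < g i} with h | h
  · exact ⟨1, one_pos, fun i hi => (h.false ⟨i, hi⟩).elim⟩
  · obtain ⟨i₀, hi₀⟩ := Finite.exists_min fun i : {i // 0 < g i} => g i
    exact ⟨g i₀, i₀.2, fun i hi => hi₀ ⟨i, hi⟩⟩

lemma indicator_one_le_one {ι : Type} (S : Set ι) : S.indicator (1 : ι → ℝ) ≤ 1 :=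
  Set.indicator_le_self' fun _ _ => zero_le_one

lemma mass_eq_dotProduct (d : ι → ℝ) (S : Set ι) : mass d S = d ⬝ᵥ S.indicator 1 := by
  refine Finset.sum_congr rfl fun q _ => ?_
  by_cases h : q ∈ S <;> simp [h]

lemma uniformOn_mem_stdSimplex {S : Set ι} (hS : S.Nonempty) :
    uniformOn S ∈ stdSimplex ℝ ι := by
  have hcard : (S.ncard : ℝ) ≠ 0 := by
    exact_mod_cast (Set.ncard_pos (Set.toFinite S)).2 hS |>.ne'
  refine ⟨fun q => ?_, ?_⟩
  · unfold uniformOn; split_ifs <;> positivity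
  · have hfilter : (Finset.univ.filter (· ∈ S)).card = S.ncard := by
      rw [Set.ncard_eq_toFinset_card']; congr 1; ext; simp
    simp [uniformOn, Finset.sum_ite, hfilter, hcard]

lemma supp_uniformOn {ι : Type} [Finite ι] (S : Set ι) : supp (uniformOn S) = S := by
  ext q
  change 0 < uniformOn S q ↔ q ∈ S
  unfold uniformOn
  split_ifs with h
  · have := (Set.ncard_pos (Set.toFinite S)).2 ⟨q, h⟩
    simp only [h, iff_true]; positivity
  · simp [h]

end Simplex

section Bellman

variable {Q A : Type} [Fintype Q] [Fintype A] (M : MDP Q A) {w w' : Q → ℝ} {S : Set Q} {q : Q}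

/-- The Bellman operator: the largest expectation of `w` after one step. Its `n`-th iterate is the
optimal value of the reward `w` paid after exactly `n` steps. -/
noncomputable def bellman (w : Q → ℝ) : Q → ℝ := fun q => ⨆ a, M.δ q a ⬝ᵥ w

lemma δ_mem_stdSimplex (q : Q) (a : A) : M.δ q a ∈ stdSimplex ℝ Q :=
  ⟨M.δ_nonneg q a, M.δ_sum q a⟩

lemma dotProduct_le_bellman (w : Q → ℝ) (q : Q) (a : A) : M.δ q a ⬝ᵥ w ≤ M.bellman w q :=
  le_ciSup (f := fun a => M.δ q a ⬝ᵥ w) (Set.finite_range _).bddAbove a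

lemma exists_dotProduct_eq_bellman [Nonempty A] (w : Q → ℝ) (q : Q) :
    ∃ a, M.δ q a ⬝ᵥ w = M.bellman w q :=
  exists_eq_ciSup_of_finite

lemma bellman_iterate_le_affine [Nonempty A] {x y : ℝ} (hy : 0 ≤ y)
    (h : ∀ q, w q ≤ x + y * w' q) (n : ℕ) (q : Q) :
    M.bellman^[n] w q ≤ x + y * M.bellman^[n] w' q := by
  induction n generalizing q with
  | zero => exact h q
  | succ n ih =>
    rw [Function.iterate_succ_apply', Function.iterate_succ_apply']
    refine ciSup_le fun a => ?_
    calc M.δ q a ⬝ᵥ M.bellman^[n] w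
        ≤ M.δ q a ⬝ᵥ fun q' => x + y * M.bellman^[n] w' q' :=
          dotProduct_le_dotProduct_of_supp (M.δ_nonneg q a) fun q' _ => ih q'
      _ = x + y * (M.δ q a ⬝ᵥ M.bellman^[n] w') := dotProduct_affine (M.δ_mem_stdSimplex q a) _ _ _
      _ ≤ x + y * M.bellman (M.bellman^[n] w') q := by gcongr; exact M.dotProduct_le_bellman _ q a

lemma bellman_iterate_nonneg (hw : 0 ≤ w) (n : ℕ) : 0 ≤ M.bellman^[n] w := by
  induction n with
  | zero => exact hw
  | succ n ih =>
    rw [Function.iterate_succ_apply']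
    exact fun q => Real.iSup_nonneg fun a => dotProduct_nonneg_of_nonneg (M.δ_nonneg q a) ih

lemma bellman_iterate_le_one [Nonempty A] (hw : w ≤ 1) (n : ℕ) :
    M.bellman^[n] w ≤ 1 := fun q => by
  simpa using M.bellman_iterate_le_affine (x := 1) le_rfl
    (fun p => (hw p).trans_eq (by simp : (1 : ℝ) = 1 + 0 * w p)) n q

lemma bellman_eq_one_iff [Nonempty A] (hw : w ≤ 1) :
    M.bellman w q = 1 ↔ q ∈ M.Pre {q | w q = 1} := by
  have haction (a : A) : M.δ q a ⬝ᵥ w = 1 ↔ ∀ q', 0 < M.δ q a q' → w q' = 1 :=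
    dotProduct_eq_one_iff (M.δ_mem_stdSimplex q a) hw
  constructor
  · intro h
    obtain ⟨a, ha⟩ := M.exists_dotProduct_eq_bellman w q
    exact ⟨a, (haction a).1 (ha.trans h)⟩
  · rintro ⟨a, ha⟩
    exact (M.bellman_iterate_le_one hw 1 q).antisymm
      (((haction a).2 ha).ge.trans (M.dotProduct_le_bellman w q a))

lemma setOf_bellman_iterate_eq_one [Nonempty A] (hw : w ≤ 1) (n : ℕ) :
    {q | M.bellman^[n] w q = 1} = M.Pre^[n] {q | w q = 1} := by
  induction n with
  | zero => rfl
  | succ n ih =>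
    rw [Function.iterate_succ_apply', Function.iterate_succ_apply', ← ih]
    exact Set.ext fun q => M.bellman_eq_one_iff (M.bellman_iterate_le_one hw n)

lemma exists_pos_le_δ : ∃ κ > 0, ∀ q a q', 0 < M.δ q a q' → κ ≤ M.δ q a q' := by
  obtain ⟨κ, hκ, h⟩ := exists_pos_le_of_pos fun p : Q × A × Q => M.δ p.1 p.2.1 p.2.2
  exact ⟨κ, hκ, fun q a q' => h (q, a, q')⟩

lemma dotProduct_le_of_not_allowed {κ η : ℝ} {a : A}
    (hκ : ∀ q a q', 0 < M.δ q a q' → κ ≤ M.δ q a q') (hη : 0 ≤ η) (hw : w ≤ 1)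
    (hgap : ∀ q ∉ S, w q ≤ 1 - η) (ha : ¬ M.Allowed S q a) : M.δ q a ⬝ᵥ w ≤ 1 - κ * η := by
  unfold Allowed at ha
  push Not at ha
  obtain ⟨q', hq', hS⟩ := ha
  have hcost := mul_one_sub_le_one_sub_dotProduct (M.δ_mem_stdSimplex q a) hw q'
  have hκη : κ * η ≤ M.δ q a q' * (1 - w q') :=
    mul_le_mul (hκ q a q' hq') (by linarith [hgap q' hS]) hη hq'.le
  linarith

end Bellman

section Strategies

variable {Q A : Type} [Fintype Q] [Fintype A] (M : MDP Q A) {σ : List (Q × A) → Q → A → ℝ}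
  {d : Q → ℝ} {i : ℕ}

/-- The state-action pairs along a finite path, in the form in which a strategy reads them. -/
def history {Q A : Type} {i : ℕ} (qs : Fin (i + 1) → Q) (as : Fin i → A) : List (Q × A) :=
  List.ofFn fun k : Fin i => (qs k.castSucc, as k)

lemma length_history {Q A : Type} {i : ℕ} (qs : Fin (i + 1) → Q) (as : Fin i → A) :
    (history qs as).length = i :=
  List.length_ofFn

lemma sum_fin_snoc {X : Type} [Fintype X] (i : ℕ) (g : (Fin (i + 1) → X) → ℝ) :
    ∑ f, g f = ∑ f : Fin i → X, ∑ x, g (Fin.snoc (α := fun _ => X) f x) := by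
  rw [← Equiv.sum_comp (Fin.snocEquiv fun _ : Fin (i + 1) => X), Fintype.sum_prod_type,
    Finset.sum_comm]
  rfl

lemma pathProb_snoc (σ : List (Q × A) → Q → A → ℝ) (d : Q → ℝ)
    (qs : Fin (i + 1) → Q) (as : Fin i → A) (q : Q) (a : A) :
    M.pathProb σ d (i + 1) (Fin.snoc (α := fun _ => Q) qs q) (Fin.snoc (α := fun _ => A) as a) =
      M.pathProb σ d i qs as *
        (σ (history qs as) (qs (Fin.last i)) a * M.δ (qs (Fin.last i)) a q) := by
  have hQ (k : ℕ) (hk : k < i + 1) : (Fin.snoc (α := fun _ => Q) qs q : Fin (i + 2) → Q)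
      ⟨k, hk.trans (Nat.lt_succ_self _)⟩ = qs ⟨k, hk⟩ := Fin.snoc_castSucc (i := ⟨k, hk⟩) ..
  have hA (k : ℕ) (hk : k < i) : (Fin.snoc (α := fun _ => A) as a : Fin (i + 1) → A)
      ⟨k, hk.trans (Nat.lt_succ_self _)⟩ = as ⟨k, hk⟩ := Fin.snoc_castSucc (i := ⟨k, hk⟩) ..
  have hpast (m : ℕ) (hm : m ≤ i) :
      (List.ofFn fun k : Fin m =>
        ((Fin.snoc (α := fun _ => Q) qs q : Fin (i + 2) → Q) ⟨k, by have := k.isLt; omega⟩,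
          (Fin.snoc (α := fun _ => A) as a : Fin (i + 1) → A) ⟨k, by have := k.isLt; omega⟩)) =
      List.ofFn fun k : Fin m =>
        (qs ⟨k, by have := k.isLt; omega⟩, as ⟨k, by have := k.isLt; omega⟩) :=
    congrArg List.ofFn (funext fun k => Prod.ext (hQ k (by omega)) (hA k (by omega)))
  have hzero : (Fin.snoc (α := fun _ => Q) qs q : Fin (i + 2) → Q) 0 = qs 0 := hQ 0 i.succ_pos
  simp only [pathProb, Fin.prod_univ_castSucc, hzero, hpast _ (Fin.is_le _),
    Fin.snoc_castSucc, Fin.succ_castSucc, Fin.succ_last, Fin.snoc_last, mul_assoc]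
  rfl

lemma stepDist_dotProduct (σ : List (Q × A) → Q → A → ℝ) (d : Q → ℝ) (i : ℕ) (w : Q → ℝ) :
    M.stepDist σ d i ⬝ᵥ w =
      ∑ qs : Fin (i + 1) → Q, ∑ as, M.pathProb σ d i qs as * w (qs (Fin.last i)) := by
  simp only [dotProduct, stepDist, Finset.sum_mul, ite_mul, zero_mul]
  rw [Finset.sum_comm]
  refine Finset.sum_congr rfl fun qs _ => ?_
  rw [Finset.sum_comm]
  simp only [Finset.sum_ite_eq, Finset.mem_univ, if_true]

lemma stepDist_zero (σ : List (Q × A) → Q → A → ℝ) (d : Q → ℝ) : M.stepDist σ d 0 = d := by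
  refine dotProduct_eq _ _ fun w => ?_
  rw [stepDist_dotProduct, sum_fin_snoc]
  simp [pathProb, dotProduct, Fin.snoc]

lemma stepDist_succ_dotProduct (σ : List (Q × A) → Q → A → ℝ) (d : Q → ℝ) (i : ℕ) (w : Q → ℝ) :
    M.stepDist σ d (i + 1) ⬝ᵥ w =
      ∑ qs : Fin (i + 1) → Q, ∑ as, M.pathProb σ d i qs as *
        (σ (history qs as) (qs (Fin.last i)) ⬝ᵥ fun a => M.δ (qs (Fin.last i)) a ⬝ᵥ w) := by
  rw [stepDist_dotProduct, sum_fin_snoc]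
  refine Finset.sum_congr rfl fun qs _ => ?_
  simp_rw [sum_fin_snoc, pathProb_snoc, Fin.snoc_last]
  rw [Finset.sum_comm]
  refine Finset.sum_congr rfl fun as _ => ?_
  simp only [dotProduct, Finset.mul_sum, mul_assoc]
  exact Finset.sum_comm

lemma IsStrategy.mem_stdSimplex {Q A : Type} [Fintype A] {σ : List (Q × A) → Q → A → ℝ}
    (hσ : IsStrategy σ) (h : List (Q × A)) (q : Q) :
    σ h q ∈ stdSimplex ℝ A :=
  ⟨hσ.1 h q, hσ.2 h q⟩

lemma pathProb_nonneg (hσ : IsStrategy σ) (hd : 0 ≤ d) (qs : Fin (i + 1) → Q) (as : Fin i → A) :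
    0 ≤ M.pathProb σ d i qs as :=
  mul_nonneg (hd _) (Finset.prod_nonneg fun _ _ => mul_nonneg (hσ.1 _ _ _) (M.δ_nonneg _ _ _))

lemma stepDist_mem_stdSimplex (hσ : IsStrategy σ) (hd : d ∈ stdSimplex ℝ Q) (i : ℕ) :
    M.stepDist σ d i ∈ stdSimplex ℝ Q := by
  refine ⟨fun q => Finset.sum_nonneg fun qs _ => Finset.sum_nonneg fun as _ => ?_, ?_⟩
  · split_ifs
    exacts [M.pathProb_nonneg hσ hd.1 qs as, le_rfl]
  · rw [← dotProduct_one]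
    induction i with
    | zero => rw [stepDist_zero, dotProduct_one, hd.2]
    | succ i ih =>
      have hstep (q : Q) (a : A) : M.δ q a ⬝ᵥ 1 = 1 := by rw [dotProduct_one, M.δ_sum]
      have hmix (h : List (Q × A)) (q : Q) : (σ h q ⬝ᵥ fun _ => 1) = 1 :=
        dotProduct_const (hσ.mem_stdSimplex h q) 1
      simp only [stepDist_succ_dotProduct, hstep, hmix]
      exact (M.stepDist_dotProduct σ d i 1).symm.trans ih

lemma stepDist_succ_dotProduct_le (hσ : IsStrategy σ) (hd : 0 ≤ d) (i : ℕ) (w : Q → ℝ) :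
    M.stepDist σ d (i + 1) ⬝ᵥ w ≤ M.stepDist σ d i ⬝ᵥ M.bellman w := by
  rw [stepDist_succ_dotProduct, stepDist_dotProduct]
  gcongr with qs _ as _
  · exact M.pathProb_nonneg hσ hd qs as
  · have hσ' := hσ.mem_stdSimplex (history qs as) (qs (Fin.last i))
    exact (dotProduct_le_dotProduct_of_supp hσ'.1 fun a _ => M.dotProduct_le_bellman w _ a).trans
      (dotProduct_const hσ' _).le

lemma stepDist_add_dotProduct_le (hσ : IsStrategy σ) (hd : 0 ≤ d) (i n : ℕ) (w : Q → ℝ) :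
    M.stepDist σ d (i + n) ⬝ᵥ w ≤ M.stepDist σ d i ⬝ᵥ M.bellman^[n] w := by
  induction n generalizing w with
  | zero => exact le_rfl
  | succ n ih => exact (M.stepDist_succ_dotProduct_le hσ hd (i + n) w).trans (ih _)

/-- The deterministic strategy that plays by the decision rule `f i` at time `i`, whatever the
past. -/
noncomputable def markov {Q A : Type} (f : ℕ → Q → A) : List (Q × A) → Q → A → ℝ :=
  fun h q => Pi.single (f h.length q) 1

lemma isStrategy_markov {Q A : Type} [Fintype A] (f : ℕ → Q → A) : IsStrategy (markov f) :=
  ⟨fun h q => (single_mem_stdSimplex ℝ (f h.length q)).1,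
    fun h q => (single_mem_stdSimplex ℝ (f h.length q)).2⟩

/-- The transition matrix of the Markov chain obtained by fixing the decision rule `f`. -/
def ruleMatrix (f : Q → A) : Matrix Q Q ℝ := Matrix.of fun q => M.δ q (f q)

/-- The transition matrix of playing the decision rules of a plan `l` one after the other. -/
noncomputable def planMatrix (l : List (Q → A)) : Matrix Q Q ℝ := (l.map M.ruleMatrix).prod

lemma planMatrix_nil : M.planMatrix [] = 1 := rfl

lemma planMatrix_cons (f : Q → A) (l : List (Q → A)) :
    M.planMatrix (f :: l) = M.ruleMatrix f * M.planMatrix l := by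
  simp [planMatrix]

lemma planMatrix_append (l l' : List (Q → A)) :
    M.planMatrix (l ++ l') = M.planMatrix l * M.planMatrix l' := by
  simp [planMatrix]

lemma planMatrix_mem_rowStochastic (l : List (Q → A)) : M.planMatrix l ∈ rowStochastic ℝ Q := by
  refine Submonoid.list_prod_mem _ fun P hP => ?_
  obtain ⟨f, -, rfl⟩ := List.mem_map.1 hP
  exact mem_rowStochastic_iff_sum.2 ⟨fun q => M.δ_nonneg q (f q), fun q => M.δ_sum q (f q)⟩

lemma stepDist_markov_succ (f : ℕ → Q → A) (d : Q → ℝ) (i : ℕ) :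
    M.stepDist (markov f) d (i + 1) = M.stepDist (markov f) d i ᵥ* M.ruleMatrix (f i) := by
  refine dotProduct_eq _ _ fun w => ?_
  rw [← dotProduct_mulVec, stepDist_succ_dotProduct, stepDist_dotProduct]
  simp only [markov, length_history, single_one_dotProduct]
  rfl

lemma stepDist_markov (f : ℕ → Q → A) (d : Q → ℝ) (i : ℕ) :
    M.stepDist (markov f) d i = d ᵥ* M.planMatrix ((List.range i).map f) := by
  induction i with
  | zero => rw [stepDist_zero, List.range_zero, List.map_nil, planMatrix_nil, vecMul_one]
  | succ i ih =>
    rw [stepDist_markov_succ, ih, vecMul_vecMul, List.range_succ, List.map_append,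
      planMatrix_append]
    simp [planMatrix]

lemma mass_stepDist_markov (f : ℕ → Q → A) (d : Q → ℝ) (i : ℕ) (S : Set Q) :
    mass (M.stepDist (markov f) d i) S =
      d ⬝ᵥ (M.planMatrix ((List.range i).map f) *ᵥ S.indicator 1) := by
  rw [stepDist_markov, mass_eq_dotProduct, dotProduct_mulVec]

end Strategies

section LimitSure

variable {Q A : Type} [Fintype Q] [Fintype A] (M : MDP Q A) {σ : List (Q × A) → Q → A → ℝ}
  {d : Q → ℝ} {S : Set Q}

lemma IsStrategy.nonempty {Q A : Type} [Fintype A] [Nonempty Q] {σ : List (Q × A) → Q → A → ℝ}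
    (hσ : IsStrategy σ) : Nonempty A :=
  (supp_nonempty_of_mem_stdSimplex (hσ.mem_stdSimplex [] (Classical.arbitrary Q))).to_type

lemma exists_planMatrix_mulVec_eq_bellman_iterate [Nonempty A] (w : Q → ℝ) (n : ℕ) :
    ∃ l : List (Q → A), l.length = n ∧ M.planMatrix l *ᵥ w = M.bellman^[n] w := by
  induction n with
  | zero => exact ⟨[], rfl, one_mulVec w⟩
  | succ n ih =>
    obtain ⟨l, hlen, hl⟩ := ih
    choose f hf using M.exists_dotProduct_eq_bellman (M.bellman^[n] w)
    refine ⟨f :: l, by simp [hlen], ?_⟩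
    rw [planMatrix_cons, ← mulVec_mulVec, hl, Function.iterate_succ_apply']
    exact funext hf

lemma exists_seq_of_isPrefix {X : Type*} [Nonempty X] {L : ℕ → List X}
    (hL : ∀ k, L k <+: L (k + 1)) :
    ∃ f : ℕ → X, ∀ k, (List.range (L k).length).map f = L k := by
  have hprefix {j k : ℕ} (hjk : j ≤ k) : L j <+: L k :=
    Nat.rel_of_forall_rel_succ_of_le (· <+: ·) hL hjk
  refine ⟨fun n => if h : ∃ k, n < (L k).length then (L h.choose)[n]'h.choose_spec
    else Classical.arbitrary X, fun k => List.ext_getElem (by simp) fun n _ hn => ?_⟩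
  have h : ∃ k, n < (L k).length := ⟨k, hn⟩
  simp only [List.getElem_map, List.getElem_range, dif_pos h]
  rcases le_total h.choose k with hk | hk
  · exact (hprefix hk).getElem h.choose_spec
  · exact ((hprefix hk).getElem hn).symm

lemma mass_stepDist_add_le (hσ : IsStrategy σ) (hd : 0 ≤ d) (i n : ℕ) (S : Set Q) :
    mass (M.stepDist σ d (i + n)) S ≤ M.stepDist σ d i ⬝ᵥ M.bellman^[n] (S.indicator 1) := by
  rw [mass_eq_dotProduct]
  exact M.stepDist_add_dotProduct_le hσ hd i n _

lemma exists_le_mass_stepDist [Nonempty A] {c : ℝ} {n : ℕ} (hd : d ∈ stdSimplex ℝ Q)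
    (h : ∀ q ∈ supp d, c ≤ M.bellman^[n] (S.indicator 1) q) :
    ∃ σ, IsStrategy σ ∧ c ≤ mass (M.stepDist σ d n) S := by
  obtain ⟨l, rfl, hl⟩ := M.exists_planMatrix_mulVec_eq_bellman_iterate (S.indicator 1) n
  obtain ⟨f, hf⟩ := exists_seq_of_isPrefix fun _ => List.prefix_refl l
  refine ⟨markov f, isStrategy_markov f, ?_⟩
  rw [mass_stepDist_markov, hf 0, hl]
  exact le_dotProduct_of_supp hd h

lemma limitSureEventually_iff [Nonempty A] (hd : d ∈ stdSimplex ℝ Q) :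
    M.LimitSureEventually d S ↔
      ∀ ε > 0, ∃ n, ∀ q ∈ supp d, 1 - ε ≤ M.bellman^[n] (S.indicator 1) q := by
  constructor
  · intro h ε hε
    obtain ⟨c, hc, hcd⟩ := exists_pos_le_of_pos d
    obtain ⟨σ, hσ, n, hn⟩ := h (c * ε) (mul_pos hc hε)
    refine ⟨n, fun q hq => one_sub_le_of_le_dotProduct hd
      (M.bellman_iterate_le_one (indicator_one_le_one S) n) hc (hcd q hq) (hn.trans ?_)⟩
    simpa only [zero_add, stepDist_zero] using M.mass_stepDist_add_le hσ hd.1 0 n S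
  · intro h ε hε
    obtain ⟨n, hn⟩ := h ε hε
    obtain ⟨σ, hσ, hmass⟩ := M.exists_le_mass_stepDist hd hn
    exact ⟨σ, hσ, n, hmass⟩

lemma indicator_pre_le_bellman (S : Set Q) (q : Q) :
    (M.Pre S).indicator (1 : Q → ℝ) q ≤ M.bellman (S.indicator 1) q := by
  refine Set.indicator_le' (fun q hq => ?_) (fun q _ => ?_) q
  · obtain ⟨a, ha⟩ := hq
    refine le_trans (le_dotProduct_of_supp (M.δ_mem_stdSimplex q a) fun q' hq' => ?_)
      (M.dotProduct_le_bellman _ q a)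
    exact (Set.indicator_of_mem (ha q' hq') (1 : Q → ℝ)).ge
  · exact M.bellman_iterate_nonneg (Set.indicator_nonneg fun _ _ => zero_le_one) 1 q

lemma exists_bellman_indicator_le_affine [Nonempty A] (S : Set Q) :
    ∃ κ > 0, ∀ q,
      M.bellman (S.indicator 1) q ≤ (1 - κ) + κ * (M.Pre S).indicator (1 : Q → ℝ) q := by
  obtain ⟨κ, hκ, hδ⟩ := M.exists_pos_le_δ
  refine ⟨κ, hκ, fun q => ?_⟩
  by_cases hq : q ∈ M.Pre S
  · simpa [hq] using M.bellman_iterate_le_one (indicator_one_le_one S) 1 q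
  · refine ciSup_le fun a => ?_
    have hout : ∀ q ∉ S, S.indicator (1 : Q → ℝ) q ≤ 1 - 1 := fun q hq => by simp [hq]
    simpa [hq] using M.dotProduct_le_of_not_allowed hδ zero_le_one (indicator_one_le_one S)
      hout fun ha => hq ⟨a, ha⟩

lemma limitSureEventually_pre_iff [Nonempty A] (hd : d ∈ stdSimplex ℝ Q) :
    M.LimitSureEventually d (M.Pre S) ↔
      ∀ ε > 0, ∃ n ≥ 1, ∀ q ∈ supp d, 1 - ε ≤ M.bellman^[n] (S.indicator 1) q := by
  rw [M.limitSureEventually_iff hd]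
  constructor
  · intro h ε hε
    obtain ⟨n, hn⟩ := h ε hε
    refine ⟨n + 1, Nat.le_add_left 1 n, fun q hq => (hn q hq).trans ?_⟩
    have hle := M.bellman_iterate_le_affine (x := 0) zero_le_one
      (fun p => by simpa using M.indicator_pre_le_bellman S p) n q
    rwa [zero_add, one_mul] at hle
  · intro h ε hε
    obtain ⟨κ, hκ, hle⟩ := M.exists_bellman_indicator_le_affine S
    obtain ⟨n, hn, hv⟩ := h (κ * ε) (mul_pos hκ hε)
    obtain ⟨m, rfl⟩ := Nat.exists_eq_add_of_le' hn
    refine ⟨m, fun q hq => ?_⟩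
    have hcost : κ * (1 - M.bellman^[m] ((M.Pre S).indicator 1) q) ≤ κ * ε := by
      have hqv : 1 - κ * ε ≤ M.bellman^[m] (M.bellman (S.indicator 1)) q := hv q hq
      linarith [M.bellman_iterate_le_affine hκ.le hle m q]
    linarith [le_of_mul_le_mul_left hcost hκ]

end LimitSure

section Necessity

variable {Q A : Type} [Fintype Q] [Fintype A] (M : MDP Q A) {d : Q → ℝ} {T : Set Q}

lemma tendsto_mass {u : ℕ → Q → ℝ} (hu : Tendsto u atTop (nhds d)) (S : Set Q) :
    Tendsto (fun k => mass (u k) S) atTop (nhds (mass d S)) := by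
  simp only [mass_eq_dotProduct]
  exact tendsto_finsetSum _ fun q _ => (tendsto_pi_nhds.1 hu q).mul_const _

lemma mass_supp (hd : d ∈ stdSimplex ℝ Q) : mass d (supp d) = 1 := by
  rw [mass_eq_dotProduct, dotProduct_eq_one_iff hd (indicator_one_le_one _)]
  exact fun q hq => Set.indicator_of_mem hq 1

lemma supp_subset_of_mass_eq_one (hd : d ∈ stdSimplex ℝ Q) (h : mass d T = 1) : supp d ⊆ T := by
  rw [mass_eq_dotProduct, dotProduct_eq_one_iff hd (indicator_one_le_one _)] at h
  exact fun q hq => Set.mem_of_indicator_ne_zero ((h q hq).trans_ne one_ne_zero)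

lemma exists_tendsto_mass_eq_one {u : ℕ → Q → ℝ} (hu : ∀ i, u i ∈ stdSimplex ℝ Q)
    (h : ∀ ε > (0 : ℝ), {i | 1 - ε ≤ mass (u i) T}.Infinite) :
    ∃ d ∈ stdSimplex ℝ Q, mass d T = 1 ∧
      ∃ φ : ℕ → ℕ, StrictMono φ ∧ Tendsto (u ∘ φ) atTop (nhds d) := by
  obtain ⟨φ, hφ, hmass⟩ := extraction_forall_of_frequently
    (P := fun k i => 1 - 1 / ((k : ℝ) + 1) ≤ mass (u i) T)
    fun k => Nat.frequently_atTop_iff_infinite.2 (h _ Nat.one_div_pos_of_nat)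
  obtain ⟨d, hd, ψ, hψ, hlim⟩ := (isCompact_stdSimplex ℝ Q).tendsto_subseq fun k => hu (φ k)
  refine ⟨d, hd, le_antisymm ?_ ?_, φ ∘ ψ, hφ.comp hψ, hlim⟩
  · rw [mass_eq_dotProduct]
    exact dotProduct_le_one hd (indicator_one_le_one T)
  · refine le_of_tendsto_of_tendsto' ?_ (tendsto_mass hlim T) fun k => hmass (ψ k)
    simpa using (tendsto_one_div_add_atTop_nhds_zero_nat.comp hψ.tendsto_atTop).const_sub (1 : ℝ)

variable {M} in
lemma ASWeakly.exists_subset (hd : d ∈ stdSimplex ℝ Q) (h : M.ASWeakly d T) :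
    ∃ T' ⊆ T, M.LimitSureEventually d T' ∧
      M.LimitSureEventually (uniformOn T') (M.Pre T') := by
  obtain ⟨σ, hσ, hinf⟩ := h
  have hD := M.stepDist_mem_stdSimplex hσ hd
  obtain ⟨L, hL, hLT, φ, hφ, hlim⟩ := exists_tendsto_mass_eq_one hD hinf
  obtain ⟨q₀, hq₀⟩ := supp_nonempty_of_mem_stdSimplex hL
  have : Nonempty Q := ⟨q₀⟩
  have : Nonempty A := hσ.nonempty
  have hmass {ε : ℝ} (hε : 0 < ε) :
      ∀ᶠ k in atTop, 1 - ε ≤ mass (M.stepDist σ d (φ k)) (supp L) :=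
    (tendsto_mass hlim (supp L)).eventually_const_le (by rw [mass_supp hL]; linarith)
  refine ⟨supp L, supp_subset_of_mass_eq_one hL hLT, fun ε hε => ?_, ?_⟩
  · obtain ⟨k, hk⟩ := (hmass hε).exists
    exact ⟨σ, hσ, φ k, hk⟩
  rw [M.limitSureEventually_pre_iff (uniformOn_mem_stdSimplex ⟨q₀, hq₀⟩), supp_uniformOn]
  intro ε hε
  obtain ⟨c, hc, hcL⟩ := exists_pos_le_of_pos L
  have hlarge : ∀ᶠ k in atTop, ∀ q ∈ supp L, c / 2 ≤ M.stepDist σ d (φ k) q :=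
    eventually_all.2 fun q => eventually_imp_distrib_left.2 fun hq =>
      (tendsto_pi_nhds.1 hlim q).eventually_const_le (by linarith [hcL q hq])
  obtain ⟨k, hk⟩ := hlarge.exists
  obtain ⟨l, hl, hkl⟩ :=
    ((hmass (mul_pos (half_pos hc) hε)).and (eventually_gt_atTop k)).exists
  obtain ⟨n, hn⟩ := Nat.exists_eq_add_of_lt (hφ hkl)
  refine ⟨n + 1, Nat.le_add_left 1 n, fun q hq => one_sub_le_of_le_dotProduct (hD (φ k))
    (M.bellman_iterate_le_one (indicator_one_le_one _) _) (half_pos hc) (hk q hq) ?_⟩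
  rw [hn, add_assoc] at hl
  exact hl.trans (M.mass_stepDist_add_le hσ hd.1 _ _ _)

end Necessity

section Recurrence

variable {Q A : Type} [Fintype Q] [Fintype A] (M : MDP Q A) {w : Q → ℝ} {r : ℕ}

lemma exists_iterate_mul_eq {X : Type*} [Finite X] (f : X → X) (x : X) :
    ∃ r ≥ 1, ∀ i ≥ 1, f^[r * i] x = f^[r] x := by
  obtain ⟨m, n, hne, heq⟩ := Finite.exists_ne_map_eq_of_infinite fun k => f^[k] x
  wlog hmn : m < n generalizing m n
  · exact this n m hne.symm heq.symm (hne.lt_or_gt.resolve_left hmn)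
  obtain ⟨p, rfl⟩ := Nat.exists_eq_add_of_lt hmn
  set r := (p + 1) * (m + 1) with hr
  have hmr : m ≤ r := by nlinarith
  have hper : Function.IsPeriodicPt f (p + 1) (f^[m] x) := by
    change f^[p + 1] (f^[m] x) = f^[m] x
    rw [← Function.iterate_add_apply, heq]
    congr 1
    omega
  have hperr : Function.IsPeriodicPt f (p + 1) (f^[r] x) := by
    rw [← Nat.sub_add_cancel hmr, Function.iterate_add_apply]
    exact hper.apply_iterate (r - m)
  refine ⟨r, Nat.mul_pos p.succ_pos m.succ_pos, fun i hi => ?_⟩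
  obtain ⟨j, rfl⟩ := Nat.exists_eq_add_of_le' hi
  rw [mul_add_one, Function.iterate_add_apply]
  exact hperr.trans_dvd ((Dvd.intro _ hr.symm).mul_right j)

lemma exists_persistence [Nonempty A] (hw₀ : 0 ≤ w) (hw : w ≤ 1) :
    ∃ r ≥ 1, ∃ γ > 0, ∀ i ≥ 1, ∀ j ≥ i, ∀ q,
      M.bellman^[r * i] w q ≤ 1 - γ * (1 - M.bellman^[r * j] w q) := by
  obtain ⟨r, hr, hper⟩ := exists_iterate_mul_eq M.Pre {q | w q = 1}
  obtain ⟨γ, hγ, hgap⟩ := exists_pos_le_of_pos fun q => 1 - M.bellman^[r] w q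
  have hbase (j : ℕ) (hj : j ≥ 1) (q : Q) :
      M.bellman^[r] w q ≤ (1 - γ) + γ * M.bellman^[r * j] w q := by
    rcases (M.bellman_iterate_le_one hw r q).eq_or_lt with hq | hq
    · have hmem : q ∈ {q | M.bellman^[r * j] w q = 1} := by
        rw [M.setOf_bellman_iterate_eq_one hw, hper j hj, ← M.setOf_bellman_iterate_eq_one hw]
        exact hq
      rw [hq, Pi.one_apply, show M.bellman^[r * j] w q = 1 from hmem]
      linarith
    · linarith [hgap q (sub_pos.2 hq), mul_nonneg hγ.le (M.bellman_iterate_nonneg hw₀ (r * j) q)]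
  refine ⟨r, hr, γ, hγ, fun i hi j hij q => ?_⟩
  obtain ⟨n, rfl⟩ := Nat.exists_eq_add_of_le' hi
  have hle := M.bellman_iterate_le_affine hγ.le (hbase (j - n) (by omega)) (r * n) q
  rw [← Function.iterate_add_apply, ← Function.iterate_add_apply, ← mul_add,
    Nat.add_sub_cancel' (by omega), ← mul_add_one] at hle
  linarith

/-- The reward `w` is recurrent if, up to any error, its value is not lost by postponing the payment
for a suitable positive number of steps. -/
def Recurrent (w : Q → ℝ) : Prop :=
  ∀ ε > 0, ∃ m ≥ 1, ∀ q, w q ≤ ε + M.bellman^[m] w q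

variable {M}

lemma Recurrent.exists_shift [Nonempty A] (h : M.Recurrent w) {ε : ℝ} (hε : 0 < ε) (hr : 1 ≤ r) :
    ∃ j ≥ 1, ∀ n q, M.bellman^[n] w q ≤ ε + M.bellman^[n + r * j] w q := by
  have hr₀ : (0 : ℝ) < r := by exact_mod_cast hr
  obtain ⟨m, hm, hle⟩ := h (ε / r) (div_pos hε hr₀)
  have hone (n : ℕ) (q : Q) : M.bellman^[n] w q ≤ ε / r + M.bellman^[n + m] w q := by
    have := M.bellman_iterate_le_affine zero_le_one (fun p => by simpa using hle p) n q
    rwa [one_mul, ← Function.iterate_add_apply] at this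
  have hmany (k n : ℕ) (q : Q) : M.bellman^[n] w q ≤ k * (ε / r) + M.bellman^[n + k * m] w q := by
    induction k with
    | zero => simp
    | succ k ih =>
      have := hone (n + k * m) q
      rw [add_assoc, ← add_one_mul] at this
      push_cast
      linarith
  refine ⟨m, hm, fun n q => ?_⟩
  simpa [mul_div_cancel₀ ε hr₀.ne'] using hmany r n q

variable (M)

/-- The states from which the reward `w` can be collected with value arbitrarily close to one in a
number of steps congruent to `c` modulo `r`. -/
def residueRegion (w : Q → ℝ) (r : ℕ) (c : ZMod r) : Set Q :=
  {q | ∀ ε > 0, ∃ m : ℕ, (m : ZMod r) = c ∧ 1 - ε ≤ M.bellman^[m] w q}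

lemma exists_residueRegion_gap [NeZero r] (w : Q → ℝ) :
    ∃ η > 0, ∀ n : ℕ, ∀ q ∉ M.residueRegion w r n, M.bellman^[n] w q ≤ 1 - η := by
  have hgap (p : ZMod r × Q) : ∃ η > 0, p.2 ∉ M.residueRegion w r p.1 →
      ∀ n : ℕ, (n : ZMod r) = p.1 → M.bellman^[n] w p.2 ≤ 1 - η := by
    by_cases hp : p.2 ∈ M.residueRegion w r p.1
    · exact ⟨1, one_pos, fun h => absurd hp h⟩
    · obtain ⟨η, hη, h⟩ := not_forall₂.1 hp
      exact ⟨η, hη, fun _ n hn => (not_le.1 fun hv => h ⟨n, hn, hv⟩).le⟩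
  choose g hg hle using hgap
  obtain ⟨η, hη, hmin⟩ := exists_pos_le_of_pos g
  refine ⟨η, hη, fun n q hq => (hle (n, q) hq n rfl).trans ?_⟩
  linarith [hmin _ (hg (n, q))]

variable {M}

lemma Recurrent.exists_ge_of_mem_residueRegion [Nonempty A] (h : M.Recurrent w) (hr : 1 ≤ r)
    {c : ZMod r} {q : Q} (hq : q ∈ M.residueRegion w r c) {ε : ℝ} (hε : 0 < ε) :
    ∃ m : ℕ, m ≥ 1 ∧ (m : ZMod r) = c ∧ 1 - ε ≤ M.bellman^[m] w q := by
  obtain ⟨m, hm, hv⟩ := hq (ε / 2) (half_pos hε)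
  obtain ⟨j, hj, hshift⟩ := h.exists_shift (half_pos hε) hr
  refine ⟨m + r * j, ?_, by simpa using hm, by linarith [hshift m q]⟩
  exact le_add_left (Nat.mul_pos hr hj)

lemma Recurrent.residueRegion_add_one_subset_pre [Nonempty A] [NeZero r] (h : M.Recurrent w)
    (hw : w ≤ 1) (c : ZMod r) : M.residueRegion w r (c + 1) ⊆ M.Pre (M.residueRegion w r c) := by
  intro q hq
  obtain ⟨κ, hκ, hδ⟩ := M.exists_pos_le_δ
  obtain ⟨η, hη, hgap⟩ := M.exists_residueRegion_gap (r := r) w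
  obtain ⟨m, hm₁, hm, hv⟩ :=
    h.exists_ge_of_mem_residueRegion NeZero.one_le hq (half_pos (mul_pos hκ hη))
  obtain ⟨n, rfl⟩ := Nat.exists_eq_add_of_le' hm₁
  obtain rfl : (n : ZMod r) = c := by simpa using hm
  obtain ⟨a, ha⟩ := M.exists_dotProduct_eq_bellman (M.bellman^[n] w) q
  rw [← Function.iterate_succ_apply' M.bellman] at ha
  refine ⟨a, by_contra fun hna => ?_⟩
  have hloss := M.dotProduct_le_of_not_allowed hδ hη.le (M.bellman_iterate_le_one hw n) (hgap n) hna
  linarith [mul_pos hκ hη]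

lemma Recurrent.exists_uniform_of_persistence [Nonempty A] (h : M.Recurrent w) (hr : 1 ≤ r) {γ : ℝ}
    (hγ : 0 < γ) (hpers : ∀ i ≥ 1, ∀ j ≥ i, ∀ q,
      M.bellman^[r * i] w q ≤ 1 - γ * (1 - M.bellman^[r * j] w q)) {ε : ℝ} (hε : 0 < ε) :
    ∃ j ≥ 1, ∀ q ∈ M.residueRegion w r 0, 1 - ε ≤ M.bellman^[r * j] w q := by
  have hsome (q : Q) : ∃ i ≥ 1, q ∈ M.residueRegion w r 0 → 1 - γ * ε ≤ M.bellman^[r * i] w q := by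
    by_cases hq : q ∈ M.residueRegion w r 0
    · obtain ⟨m, hm, hm₀, hv⟩ := h.exists_ge_of_mem_residueRegion hr hq (mul_pos hγ hε)
      obtain ⟨i, rfl⟩ := (ZMod.natCast_eq_zero_iff m r).1 hm₀
      exact ⟨i, Nat.pos_of_mul_pos_left hm, fun _ => hv⟩
    · exact ⟨1, le_rfl, fun h => absurd h hq⟩
  choose i hi hv using hsome
  refine ⟨Finset.univ.sup i + 1, Nat.le_add_left 1 _, fun q hq => ?_⟩
  have hij : i q ≤ Finset.univ.sup i + 1 :=
    (Finset.le_sup (Finset.mem_univ q)).trans (Nat.le_succ _)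
  have hcost : γ * (1 - M.bellman^[r * (Finset.univ.sup i + 1)] w q) ≤ γ * ε := by
    linarith [hv q hq, hpers (i q) (hi q) _ hij q]
  linarith [le_of_mul_le_mul_left hcost hγ]

end Recurrence

section Plans

variable {Q A : Type} [Fintype Q] [Fintype A] (M : MDP Q A) {d w : Q → ℝ} {r : ℕ} {S : Set Q}

lemma planMatrix_nonneg (l : List (Q → A)) (q q' : Q) : 0 ≤ M.planMatrix l q q' :=
  nonneg_of_mem_rowStochastic (M.planMatrix_mem_rowStochastic l)

lemma planMatrix_cons_row (f : Q → A) (l : List (Q → A)) (q : Q) :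
    M.planMatrix (f :: l) q = M.δ q (f q) ᵥ* M.planMatrix l := by
  rw [planMatrix_cons]
  rfl

-- An optimal action that leaves `Y` already costs `κ * η`, so it may be replaced by an action that
-- stays in `Y`.
lemma exists_allowed_mul_one_sub_le [Nonempty A] {κ η θ : ℝ} {u v : Q → ℝ} {Y : Set Q} {q : Q}
    (hκ : ∀ q a q', 0 < M.δ q a q' → κ ≤ M.δ q a q') (hη : 0 ≤ η) (hv : v ≤ 1)
    (hgap : ∀ q ∉ Y, v q ≤ 1 - η) (hθ₀ : 0 ≤ θ) (hθ : θ ≤ κ * η) (hu : 0 ≤ u)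
    (huv : ∀ q ∈ Y, θ * (1 - u q) ≤ 1 - v q) (hq : q ∈ M.Pre Y) :
    ∃ a, M.Allowed Y q a ∧ θ * (1 - M.δ q a ⬝ᵥ u) ≤ 1 - M.bellman v q := by
  obtain ⟨a, ha⟩ := M.exists_dotProduct_eq_bellman v q
  by_cases hsafe : M.Allowed Y q a
  · refine ⟨a, hsafe, ?_⟩
    have hle : M.δ q a ⬝ᵥ v ≤ M.δ q a ⬝ᵥ fun q' => (1 - θ) + θ * u q' :=
      dotProduct_le_dotProduct_of_supp (M.δ_nonneg q a) fun q' hq' => by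
        linarith [huv q' (hsafe q' hq')]
    rw [dotProduct_affine (M.δ_mem_stdSimplex q a)] at hle
    linarith
  · obtain ⟨b, hb⟩ := hq
    refine ⟨b, hb, ?_⟩
    have hloss := M.dotProduct_le_of_not_allowed hκ hη hv hgap hsafe
    have hnonneg : 0 ≤ θ * (M.δ q b ⬝ᵥ u) :=
      mul_nonneg hθ₀ (dotProduct_nonneg_of_nonneg (M.δ_nonneg q b) hu)
    linarith

lemma exists_safe_plan [Nonempty A] {W : ℕ → Set Q} {η : ℝ} (hw₀ : 0 ≤ w) (hw : w ≤ 1)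
    (hη : 0 < η) (hgap : ∀ n, ∀ q ∉ W n, M.bellman^[n] w q ≤ 1 - η)
    (hW : ∀ n, W (n + 1) ⊆ M.Pre (W n)) :
    ∃ θ > 0, ∀ n, ∃ l : List (Q → A), l.length = n ∧ ∀ q ∈ W n,
      supp (M.planMatrix l q) ⊆ W 0 ∧
        θ * (1 - (M.planMatrix l *ᵥ w) q) ≤ 1 - M.bellman^[n] w q := by
  obtain ⟨κ, hκ, hδ⟩ := M.exists_pos_le_δ
  have hθ : 0 < min 1 (κ * η) := lt_min one_pos (mul_pos hκ hη)
  refine ⟨min 1 (κ * η), hθ, fun n => ?_⟩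
  induction n with
  | zero =>
    refine ⟨[], rfl, fun q hq => ⟨?_, ?_⟩⟩
    · intro q' hq'
      have hpos : 0 < (1 : Matrix Q Q ℝ) q q' := hq'
      obtain rfl : q = q' := by_contra fun hne => hpos.ne' (one_apply_ne hne)
      exact hq
    · rw [planMatrix_nil, one_mulVec]
      exact mul_le_of_le_one_left (sub_nonneg.2 (hw q)) (min_le_left _ _)
  | succ n ih =>
    obtain ⟨l, hlen, hl⟩ := ih
    have hl₀ : 0 ≤ M.planMatrix l *ᵥ w := fun q =>
      dotProduct_nonneg_of_nonneg (M.planMatrix_nonneg l q) hw₀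
    choose! f hf using fun q (hq : q ∈ W (n + 1)) =>
      M.exists_allowed_mul_one_sub_le hδ hη.le (M.bellman_iterate_le_one hw n) (hgap n)
        hθ.le (min_le_right _ _) hl₀ (fun q hq => (hl q hq).2) (hW n hq)
    refine ⟨f :: l, by simp [hlen], fun q hq => ?_⟩
    obtain ⟨hsafe, hval⟩ := hf q hq
    rw [planMatrix_cons_row, planMatrix_cons, ← mulVec_mulVec, Function.iterate_succ_apply']
    exact ⟨supp_vecMul_subset (M.δ_nonneg q _) (M.planMatrix_nonneg l) fun q' hq' =>
      (hl q' (hsafe q' hq')).1, hval⟩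

lemma exists_safe_plan_residueRegion [Nonempty A] [NeZero r] (h : M.Recurrent w) (hw₀ : 0 ≤ w)
    (hw : w ≤ 1) :
    ∃ θ > 0, ∀ n : ℕ, ∃ l : List (Q → A), l.length = n ∧ ∀ q ∈ M.residueRegion w r n,
      supp (M.planMatrix l q) ⊆ M.residueRegion w r 0 ∧
        θ * (1 - (M.planMatrix l *ᵥ w) q) ≤ 1 - M.bellman^[n] w q := by
  obtain ⟨η, hη, hgap⟩ := M.exists_residueRegion_gap (r := r) w
  have hpre (n : ℕ) : M.residueRegion w r (n + 1 : ℕ) ⊆ M.Pre (M.residueRegion w r n) := by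
    rw [Nat.cast_succ]
    exact h.residueRegion_add_one_subset_pre hw (n : ZMod r)
  simpa only [Nat.cast_zero] using
    M.exists_safe_plan (W := fun n => M.residueRegion w r n) hw₀ hw hη hgap hpre

lemma exists_plan_into_residueRegion [Nonempty A] [NeZero r] (h : M.Recurrent w) (hw₀ : 0 ≤ w)
    (hw : w ≤ 1) {X : Set Q} (hX : ∀ ε > 0, ∃ n, ∀ q ∈ X, 1 - ε ≤ M.bellman^[n] w q) :
    ∃ l : List (Q → A), ∀ q ∈ X, supp (M.planMatrix l q) ⊆ M.residueRegion w r 0 := by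
  obtain ⟨η, hη, hgap⟩ := M.exists_residueRegion_gap (r := r) w
  obtain ⟨n, hn⟩ := hX (η / 2) (half_pos hη)
  obtain ⟨θ, -, hplan⟩ := M.exists_safe_plan_residueRegion (r := r) h hw₀ hw
  obtain ⟨l, -, hl⟩ := hplan n
  refine ⟨l, fun q hq => (hl q (by_contra fun hout => ?_)).1⟩
  linarith [hgap n q hout, hn q hq]

variable {M} in
lemma Recurrent.exists_invariant_region [Nonempty A] (h : M.Recurrent w) (hw₀ : 0 ≤ w)
    (hw : w ≤ 1) :
    ∃ W : Set Q,
      (∀ X : Set Q, (∀ ε > 0, ∃ n, ∀ q ∈ X, 1 - ε ≤ M.bellman^[n] w q) →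
        ∃ l : List (Q → A), ∀ q ∈ X, supp (M.planMatrix l q) ⊆ W) ∧
      ∀ ε > 0, ∃ l : List (Q → A), l ≠ [] ∧ ∀ q ∈ W,
        supp (M.planMatrix l q) ⊆ W ∧ 1 - ε ≤ (M.planMatrix l *ᵥ w) q := by
  obtain ⟨r, hr, γ, hγ, hpers⟩ := M.exists_persistence hw₀ hw
  have : NeZero r := ⟨by omega⟩
  refine ⟨M.residueRegion w r 0, fun X => M.exists_plan_into_residueRegion h hw₀ hw,
    fun ε hε => ?_⟩
  obtain ⟨θ, hθ, hplan⟩ := M.exists_safe_plan_residueRegion (r := r) h hw₀ hw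
  obtain ⟨j, hj, hv⟩ := h.exists_uniform_of_persistence hr hγ hpers (mul_pos hθ hε)
  obtain ⟨l, hlen, hl⟩ := hplan (r * j)
  refine ⟨l, List.ne_nil_of_length_pos (hlen ▸ Nat.mul_pos hr hj), fun q hq => ?_⟩
  obtain ⟨hsupp, hval⟩ := hl q (by simpa using hq)
  refine ⟨hsupp, ?_⟩
  have hcost : θ * (1 - (M.planMatrix l *ᵥ w) q) ≤ θ * ε := by linarith [hv q hq]
  linarith [le_of_mul_le_mul_left hcost hθ]

lemma asWeakly_of_return_plans {W : Set Q} {l₀ : List (Q → A)} [Nonempty A]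
    (hd : d ∈ stdSimplex ℝ Q) (hl₀ : ∀ q ∈ supp d, supp (M.planMatrix l₀ q) ⊆ W)
    (hreturn : ∀ ε > 0, ∃ l : List (Q → A), l ≠ [] ∧ ∀ q ∈ W,
      supp (M.planMatrix l q) ⊆ W ∧ 1 - ε ≤ (M.planMatrix l *ᵥ S.indicator 1) q) :
    M.ASWeakly d S := by
  choose l hne hl using fun k : ℕ => hreturn (1 / ((k : ℝ) + 1)) Nat.one_div_pos_of_nat
  obtain ⟨L, hL₀, hL⟩ : ∃ L : ℕ → List (Q → A), L 0 = l₀ ∧ ∀ k, L (k + 1) = L k ++ l k :=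
    ⟨fun k => Nat.rec l₀ (fun k L => L ++ l k) k, rfl, fun _ => rfl⟩
  obtain ⟨f, hf⟩ := exists_seq_of_isPrefix fun k => ⟨l k, (hL k).symm⟩
  have hlen : StrictMono fun k => (L k).length := strictMono_nat_of_lt_succ fun k => by
    rw [hL, List.length_append]
    exact Nat.lt_add_of_pos_right (List.length_pos_of_ne_nil (hne k))
  have hsupp (k : ℕ) : supp (d ᵥ* M.planMatrix (L k)) ⊆ W := by
    induction k with
    | zero => exact hL₀ ▸ supp_vecMul_subset hd.1 (M.planMatrix_nonneg l₀) hl₀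
    | succ k ih =>
      rw [hL, planMatrix_append, ← vecMul_vecMul]
      exact supp_vecMul_subset
        (vecMul_mem_stdSimplex hd (M.planMatrix_mem_rowStochastic _)).1
        (M.planMatrix_nonneg _) fun q hq => (hl k q (ih hq)).1
  have hmass (k : ℕ) :
      1 - 1 / ((k : ℝ) + 1) ≤ mass (M.stepDist (markov f) d (L (k + 1)).length) S := by
    rw [mass_stepDist_markov, hf, hL, planMatrix_append, ← mulVec_mulVec, dotProduct_mulVec]
    exact le_dotProduct_of_supp (vecMul_mem_stdSimplex hd (M.planMatrix_mem_rowStochastic _))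
      fun q hq => (hl k q (hsupp k hq)).2
  refine ⟨markov f, isStrategy_markov f, fun ε hε => ?_⟩
  have hsmall : ∀ᶠ k : ℕ in atTop, 1 / ((k : ℝ) + 1) ≤ ε :=
    tendsto_one_div_add_atTop_nhds_zero_nat.eventually_le_const hε
  have hgood : ∀ᶠ k : ℕ in atTop,
      1 - ε ≤ mass (M.stepDist (markov f) d (L (k + 1)).length) S :=
    hsmall.mono fun k hk => (sub_le_sub_left hk 1).trans (hmass k)
  exact Nat.frequently_atTop_iff_infinite.1 <|
    (hlen.tendsto_atTop.comp (tendsto_add_atTop_nat 1)).frequently hgood.frequently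

lemma recurrent_indicator_of_limitSureEventually_pre [Nonempty A] (hS : S.Nonempty)
    (h : M.LimitSureEventually (uniformOn S) (M.Pre S)) : M.Recurrent (S.indicator 1) := by
  intro ε hε
  rw [M.limitSureEventually_pre_iff (uniformOn_mem_stdSimplex hS), supp_uniformOn] at h
  obtain ⟨n, hn, hv⟩ := h ε hε
  refine ⟨n, hn, fun q => ?_⟩
  by_cases hq : q ∈ S
  · rw [Set.indicator_of_mem hq, Pi.one_apply]
    linarith [hv q hq]
  · rw [Set.indicator_of_notMem hq]
    exact add_nonneg hε.le
      (M.bellman_iterate_nonneg (Set.indicator_nonneg fun _ _ => zero_le_one) n q)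

lemma asWeakly_of_limitSureEventually [Nonempty A] (hd : d ∈ stdSimplex ℝ Q) (hS : S.Nonempty)
    (hreach : M.LimitSureEventually d S)
    (hrec : M.LimitSureEventually (uniformOn S) (M.Pre S)) : M.ASWeakly d S := by
  obtain ⟨W, hinto, hreturn⟩ :=
    (M.recurrent_indicator_of_limitSureEventually_pre hS hrec).exists_invariant_region
      (Set.indicator_nonneg fun _ _ => zero_le_one) (indicator_one_le_one S)
  obtain ⟨l₀, hl₀⟩ := hinto (supp d) ((M.limitSureEventually_iff hd).1 hreach)
  exact M.asWeakly_of_return_plans hd hl₀ hreturn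

variable {M}

lemma LimitSureEventually.nonempty (h : M.LimitSureEventually d S) : S.Nonempty := by
  obtain ⟨σ, -, i, hi⟩ := h (1 / 2) one_half_pos
  by_contra hS
  rw [Set.not_nonempty_iff_eq_empty] at hS
  norm_num [hS, mass] at hi

lemma ASWeakly.mono (hd : d ∈ stdSimplex ℝ Q) {T : Set Q} (hST : S ⊆ T) (h : M.ASWeakly d S) :
    M.ASWeakly d T := by
  obtain ⟨σ, hσ, hinf⟩ := h
  refine ⟨σ, hσ, fun ε hε => (hinf ε hε).mono fun i hi => ?_⟩
  exact le_trans hi <| Finset.sum_le_sum fun q _ => Set.indicator_le_indicator_apply_of_subset hST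
    ((M.stepDist_mem_stdSimplex hσ hd i).1 q)

end Plans

end MDP

open MDP in
/-- `d0` is almost-sure weakly synchronizing in `T` iff there is `T' ⊆ T` such
that `d0` is limit-sure eventually synchronizing in `T'` and (the uniform
distribution on) `T'` is limit-sure eventually synchronizing in `Pre(T')`. -/
theorem stmt6 {Q A : Type} [Fintype Q] [Fintype A] (M : MDP Q A)
    (d0 : Q → ℝ) (hd0 : IsDist d0) (T : Set Q) :
    M.ASWeakly d0 T ↔
      ∃ T' ⊆ T, M.LimitSureEventually d0 T' ∧
        M.LimitSureEventually (uniformOn T') (M.Pre T') := by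
  constructor
  · exact fun h => h.exists_subset hd0
  · rintro ⟨S, hST, hreach, hrec⟩
    obtain ⟨σ, hσ, -⟩ := hreach 1 one_pos
    have hS : S.Nonempty := hreach.nonempty
    have : Nonempty Q := hS.to_type
    have : Nonempty A := hσ.nonempty
    exact (M.asWeakly_of_limitSureEventually hd0 hS hreach hrec).mono hd0 hST
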